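/- Let P be a polytope of dimension n and let (f_F), (g_F) be Stanley's f- and g-polynomials of its faces. Then f_P(x) = x^n · f_P(1/x); equivalently, writing f_P(x) = Σ_{i=0}^{n} a_i x^i, one has a_i = a_{n−i} for all 0 ≤ i ≤ n. -/

import Mathlib

/-!
The face lattice of a polytope is Eulerian, and Stanley's induction shows that the `f`-polynomial
of any Eulerian poset is palindromic.

*Euler characteristic.* To an empty, a relatively open convex, and a nonempty compact convex set
assign `0`, `(-1) ^ dim` and `1` respectively (`Good`). These numbers respect all linear relations
between indicator functions (`euler_relation`). On the line this is a count of the jumps of the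
indicators (`line_relation`); in general one slices by a coordinate (`Good.slice`) and inducts.

*Eulerian property.* The relative interior of a face `E` is the set `cell P E` of points whose
smallest face is `E`. It is relatively open by Farkas' lemma (`cell_segOpen`), and every face is the
disjoint union of the relative interiors of its subfaces (`sum_ind_cell`). As a face `F` is compact,
`∑_{E ⊆ F} (-1) ^ dim E = 1` (`sum_faces_eq_one`). For a face `D ⊊ F`, cut `F` by a complement `W`
of the direction of `D` through a relative interior point `p` of `D`, and keep the points where a
functional `v`, minimal on `P` exactly along `D`, satisfies `v p ≤ v x < v p + ε`. For small `ε` this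
meets just the relative interiors of the faces between `D` and `F`, and it is the difference of two
nonempty compact convex sets, so `∑_{D ⊆ E ⊆ F} (-1) ^ dim E = 0` (`sum_faces_eq_zero`).

*Stanley's induction* (`stanley_palindromic`). If `f_E` is palindromic for all `E ⊊ F`, then
`x ^ (dim E + 1) g_E(1/x) = g_E + (x - 1) f_E` (`reflect_g`), and by the recursion for `f_E` the
right side is the sum of `g_D (x - 1) ^ (dim E - dim D)` over all `D ⊆ E`, the empty face included.
Inserting this into the reflection of the recursion for `f_F` and exchanging the sums, the
coefficient of each `g_D` is a signed count of the faces between `D` and `F`, which the Eulerian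
property evaluates to the coefficient of `g_D` in `f_F` itself.
-/

open scoped Pointwise Classical
open MeasureTheory Polynomial

noncomputable section

/-- The real vector corresponding to an integer vector in `ℤ^n ⊂ ℝ^n`. -/
def intVec {n : ℕ} (m : Fin n → ℤ) : Fin n → ℝ := fun i => (m i : ℝ)

/-- `F` is a face of the polytope `P`: either `P` itself or a nonempty set of maximizers
over `P` of a linear functional. -/
def IsFaceOf {n : ℕ} (P F : Set (Fin n → ℝ)) : Prop :=
  F = P ∨ (F.Nonempty ∧ ∃ u : (Fin n → ℝ) →ₗ[ℝ] ℝ,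
    F = {x | x ∈ P ∧ ∀ p ∈ P, u p ≤ u x})

/-- The dimension of (the affine span of) a face. -/
noncomputable def faceDim {n : ℕ} (F : Set (Fin n → ℝ)) : ℕ :=
  Module.finrank ℝ (affineSpan ℝ F).direction

/-- A polytope `P ⊂ ℝ^n` is simple if every vertex (`0`-dimensional face) lies on
exactly `n` edges (`1`-dimensional faces). -/
def IsSimple {n : ℕ} (P : Set (Fin n → ℝ)) : Prop :=
  ∀ v, IsFaceOf P v → faceDim v = 0 →
    {E | IsFaceOf P E ∧ faceDim E = 1 ∧ v ⊆ E}.ncard = n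


/-! ### Euler characteristic on the line -/

/-- `LineGood J e`: `J` is an empty set, a nonempty open interval or a nonempty compact interval
of the line and `e` is its Euler characteristic with compact supports. -/
def LineGood (J : Set ℝ) (e : ℤ) : Prop :=
  (J = ∅ ∧ e = 0) ∨ (J.OrdConnected ∧ IsOpen J ∧ J.Nonempty ∧ e = -1) ∨
    (∃ a b, a ≤ b ∧ J = Set.Icc a b ∧ e = 1)

/-- The indicator of `J` as an integer. -/
def ind {α : Type*} (J : Set α) (t : α) : ℤ := if t ∈ J then 1 else 0

/-- The value of the indicator of `J` immediately to the right of `t`. -/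
def rightInd (J : Set ℝ) (t : ℝ) : ℤ := if ∃ u > t, Set.Ioo t u ⊆ J then 1 else 0

/-- The value of the indicator of `J` near `-∞`. -/
def botInd (J : Set ℝ) : ℤ := if ∃ u, Set.Iio u ⊆ J then 1 else 0

theorem LineGood.ordConnected {J : Set ℝ} {e : ℤ} (h : LineGood J e) : J.OrdConnected := by
  rcases h with ⟨rfl, _⟩ | ⟨h, _⟩ | ⟨a, b, _, rfl, _⟩
  · exact Set.ordConnected_empty
  · exact h
  · exact Set.ordConnected_Icc

theorem eventually_ind_right {J : Set ℝ} (h : J.OrdConnected) (t : ℝ) :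
    ∀ᶠ s in nhdsWithin t (Set.Ioi t), ind J s = rightInd J t := by
  by_cases hr : ∃ u > t, Set.Ioo t u ⊆ J
  · obtain ⟨u, hu, hs⟩ := hr
    filter_upwards [Ioo_mem_nhdsGT hu] with s hs'
    rw [ind, rightInd, if_pos (hs hs'), if_pos ⟨u, hu, hs⟩]
  · by_cases hne : ∃ u > t, u ∈ J
    · obtain ⟨u, hu, huJ⟩ := hne
      -- a point of `J` close to `t` would put a whole right neighbourhood of `t` into `J`
      have : ∃ v > t, ∀ s ∈ Set.Ioo t v, s ∉ J := by
        by_contra hcon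
        push Not at hcon
        refine hr ⟨u, hu, fun s hs => ?_⟩
        obtain ⟨w, hw, hwJ⟩ := hcon s hs.1
        exact h.out hwJ huJ ⟨hw.2.le, hs.2.le⟩
      obtain ⟨v, hv, hvJ⟩ := this
      filter_upwards [Ioo_mem_nhdsGT hv] with s hs'
      rw [ind, rightInd, if_neg (hvJ s hs'), if_neg hr]
    · filter_upwards [self_mem_nhdsWithin] with s hs'
      rw [ind, rightInd, if_neg (fun hJ => hne ⟨s, hs', hJ⟩), if_neg hr]

theorem eventually_ind_bot {J : Set ℝ} (h : J.OrdConnected) :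
    ∀ᶠ s in Filter.atBot, ind J s = botInd J := by
  by_cases hr : ∃ u, Set.Iio u ⊆ J
  · obtain ⟨u, hs⟩ := hr
    filter_upwards [Filter.eventually_lt_atBot u] with s hs'
    rw [ind, botInd, if_pos (hs hs'), if_pos ⟨u, hs⟩]
  · have : ∃ v, ∀ s < v, s ∉ J := by
      by_contra hcon
      push Not at hcon
      obtain ⟨u, -, hu⟩ := hcon 0
      refine hr ⟨u, fun s hs => ?_⟩
      obtain ⟨w, hw, hwJ⟩ := hcon s
      exact h.out hwJ hu ⟨hw.le, le_of_lt hs⟩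
    obtain ⟨v, hv⟩ := this
    filter_upwards [Filter.eventually_lt_atBot v] with s hs'
    rw [ind, botInd, if_neg (hv s hs'), if_neg hr]

/-- The Euler characteristic of `J` is the total of the jumps of its indicator (value at a point
minus value just to the right of it) minus the value near `-∞`. -/
theorem LineGood.jumps {J : Set ℝ} {e : ℤ} (h : LineGood J e) :
    ∃ T₀ : Finset ℝ, ∀ T : Finset ℝ, T₀ ⊆ T →
      ∑ t ∈ T, (ind J t - rightInd J t) - botInd J = e := by
  rcases h with ⟨rfl, rfl⟩ | ⟨hc, ho, hne, rfl⟩ | ⟨a, b, hab, rfl, rfl⟩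
  · refine ⟨∅, fun T _ => ?_⟩
    have h1 : ∀ t : ℝ, rightInd ∅ t = 0 := fun t => by
      rw [rightInd, if_neg]
      rintro ⟨u, hu, hs⟩
      obtain ⟨w, hw⟩ := exists_between hu
      exact hs hw
    have h2 : botInd ∅ = 0 := by
      rw [botInd, if_neg]
      rintro ⟨u, hs⟩
      exact hs (show u - 1 < u by linarith)
    simp [h1, h2, ind]
  · have hright : ∀ t ∈ J, rightInd J t = 1 := fun t ht => by
      rw [rightInd, if_pos]
      obtain ⟨u, hu, hs⟩ := mem_nhdsGT_iff_exists_Ioo_subset.1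
        (mem_nhdsWithin_of_mem_nhds (ho.mem_nhds ht))
      exact ⟨u, hu, hs⟩
    by_cases hb : BddBelow J
    · refine ⟨{sInf J}, fun T hT => ?_⟩
      have hbot : botInd J = 0 := by
        rw [botInd, if_neg]
        rintro ⟨u, hs⟩
        obtain ⟨c, hc⟩ := hb
        have := hc (hs (show min (u - 1) (c - 1) < u by
          exact lt_of_le_of_lt (min_le_left _ _) (by linarith)))
        have := min_le_right (u - 1) (c - 1)
        linarith
      have hnot : sInf J ∉ J := fun hmem => by
        obtain ⟨l, hl, hs⟩ := mem_nhdsLT_iff_exists_Ioo_subset.1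
          (mem_nhdsWithin_of_mem_nhds (ho.mem_nhds hmem))
        obtain ⟨w, hw⟩ := exists_between (Set.mem_Iio.1 hl)
        exact absurd (csInf_le hb (hs hw)) (not_le.2 hw.2)
      have hinf : rightInd J (sInf J) = 1 := by
        rw [rightInd, if_pos]
        obtain ⟨u, hu⟩ := hne
        have hlt : sInf J < u := lt_of_le_of_ne (csInf_le hb hu) (fun h => hnot (h ▸ hu))
        refine ⟨u, hlt, fun s hs => ?_⟩
        obtain ⟨w, hw, hws⟩ := exists_lt_of_csInf_lt ⟨u, hu⟩ hs.1
        exact hc.out hw hu ⟨hws.le, hs.2.le⟩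
      have hoth : ∀ t, t ∉ J → t ≠ sInf J → rightInd J t = 0 := fun t ht hne' => by
        rw [rightInd, if_neg]
        rintro ⟨u, hu, hs⟩
        apply hne'
        refine le_antisymm (le_csInf hne fun x hx => ?_) ?_
        · by_contra hlt
          push Not at hlt
          obtain ⟨w, hw⟩ := exists_between hu
          exact ht (hc.out hx (hs hw) ⟨hlt.le, hw.1.le⟩)
        · refine le_of_forall_gt fun c hc' => ?_
          obtain ⟨w, hw⟩ := exists_between (lt_min hu hc')
          exact lt_of_le_of_lt (csInf_le hb (hs ⟨hw.1, hw.2.trans_le (min_le_left _ _)⟩))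
            (hw.2.trans_le (min_le_right _ _))
      rw [hbot, Finset.sum_eq_single_of_mem (sInf J) (hT (by simp))]
      · rw [hinf, ind, if_neg hnot]; norm_num
      · intro t _ ht
        by_cases htJ : t ∈ J
        · rw [hright t htJ, ind, if_pos htJ]; norm_num
        · rw [hoth t htJ ht, ind, if_neg htJ]; norm_num
    · refine ⟨∅, fun T _ => ?_⟩
      have hb' : ∀ x, ∃ w ∈ J, w < x := by
        intro x
        by_contra hcon
        push Not at hcon
        exact hb ⟨x, hcon⟩
      have hbot : botInd J = 1 := by
        rw [botInd, if_pos]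
        obtain ⟨u, hu⟩ := hne
        refine ⟨u, fun s hs => ?_⟩
        obtain ⟨w, hw, hws⟩ := hb' s
        exact hc.out hw hu ⟨hws.le, le_of_lt hs⟩
      have hz : ∀ t ∈ T, ind J t - rightInd J t = 0 := by
        intro t _
        by_cases htJ : t ∈ J
        · rw [hright t htJ, ind, if_pos htJ]; norm_num
        · rw [ind, if_neg htJ, rightInd, if_neg]
          · norm_num
          · rintro ⟨u, hu, hs⟩
            obtain ⟨w, hw⟩ := exists_between hu
            obtain ⟨v, hv, hvt⟩ := hb' t
            exact htJ (hc.out hv (hs hw) ⟨hvt.le, hw.1.le⟩)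
      rw [Finset.sum_eq_zero hz, hbot]; norm_num
  · refine ⟨{b}, fun T hT => ?_⟩
    have hbot : botInd (Set.Icc a b) = 0 := by
      rw [botInd, if_neg]
      rintro ⟨u, hs⟩
      have := (hs (show min (u - 1) (a - 1) < u by
          exact lt_of_le_of_lt (min_le_left _ _) (by linarith))).1
      have := min_le_right (u - 1) (a - 1)
      linarith
    have hr1 : ∀ t, t ∈ Set.Ico a b → rightInd (Set.Icc a b) t = 1 := fun t ht => by
      rw [rightInd, if_pos]
      exact ⟨b, ht.2, fun s hs => ⟨ht.1.trans hs.1.le, hs.2.le⟩⟩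
    have hr0 : ∀ t, t ∉ Set.Ico a b → rightInd (Set.Icc a b) t = 0 := fun t ht => by
      rw [rightInd, if_neg]
      rintro ⟨u, hu, hs⟩
      apply ht
      constructor
      · refine le_of_forall_gt fun c hc' => ?_
        obtain ⟨w, hw⟩ := exists_between (lt_min hu hc')
        exact lt_of_le_of_lt (hs ⟨hw.1, hw.2.trans_le (min_le_left _ _)⟩).1
          (hw.2.trans_le (min_le_right _ _))
      · obtain ⟨w, hw⟩ := exists_between hu
        exact hw.1.trans_le (hs hw).2
    rw [hbot, Finset.sum_eq_single_of_mem b (hT (by simp))]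
    · rw [hr0 b (by simp), ind, if_pos ⟨hab, le_rfl⟩]; norm_num
    · intro t _ ht
      by_cases h1 : t ∈ Set.Ico a b
      · rw [hr1 t h1, ind, if_pos ⟨h1.1, h1.2.le⟩]; norm_num
      · rw [hr0 t h1, ind, if_neg]
        · norm_num
        · rintro ⟨h2, h3⟩
          exact h1 ⟨h2, lt_of_le_of_ne h3 ht⟩

/-- On the line the Euler characteristic respects linear relations between indicators. -/
theorem line_relation {ι : Type*} (s : Finset ι) (J : ι → Set ℝ) (e c : ι → ℤ)
    (hJ : ∀ i ∈ s, LineGood (J i) (e i)) (h0 : ∀ t, ∑ i ∈ s, c i * ind (J i) t = 0) :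
    ∑ i ∈ s, c i * e i = 0 := by
  have hT : ∀ i : s, ∃ T₀ : Finset ℝ, ∀ T : Finset ℝ, T₀ ⊆ T →
      ∑ t ∈ T, (ind (J i) t - rightInd (J i) t) - botInd (J i) = e i :=
    fun i => (hJ i i.2).jumps
  choose T₀ hT₀ using hT
  set T := s.attach.biUnion T₀ with hTdef
  have hright : ∀ t, ∑ i ∈ s, c i * rightInd (J i) t = 0 := by
    intro t
    have hev : ∀ᶠ x in nhdsWithin t (Set.Ioi t), ∀ i ∈ s, ind (J i) x = rightInd (J i) t :=
      (Filter.eventually_all_finset s).2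
        fun i hi => eventually_ind_right (hJ i hi).ordConnected t
    obtain ⟨x, hx⟩ := hev.exists
    rw [← h0 x]
    exact Finset.sum_congr rfl fun i hi => by rw [hx i hi]
  have hbot : ∑ i ∈ s, c i * botInd (J i) = 0 := by
    have hev : ∀ᶠ x in Filter.atBot, ∀ i ∈ s, ind (J i) x = botInd (J i) :=
      (Filter.eventually_all_finset s).2
        fun i hi => eventually_ind_bot (hJ i hi).ordConnected
    obtain ⟨x, hx⟩ := hev.exists
    rw [← h0 x]
    exact Finset.sum_congr rfl fun i hi => by rw [hx i hi]
  calc ∑ i ∈ s, c i * e i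
      = ∑ i ∈ s, c i * (∑ t ∈ T, (ind (J i) t - rightInd (J i) t) - botInd (J i)) := by
        refine Finset.sum_congr rfl fun i hi => ?_
        rw [hT₀ ⟨i, hi⟩ T (Finset.subset_biUnion_of_mem T₀ (Finset.mem_attach s ⟨i, hi⟩))]
    _ = ∑ t ∈ T, (∑ i ∈ s, c i * ind (J i) t - ∑ i ∈ s, c i * rightInd (J i) t)
          - ∑ i ∈ s, c i * botInd (J i) := by
        simp only [mul_sub, Finset.sum_sub_distrib, Finset.mul_sum]
        rw [Finset.sum_comm, Finset.sum_comm (s := T) (t := s)]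
        congr 2
        exact Finset.sum_comm
    _ = 0 := by simp [h0, hright, hbot]


/-! ### Relatively open convex sets -/

/-- `SegOpen C`: the set `C` is nonempty, convex and relatively open. Relative openness is
expressed algebraically: every segment inside `C` can be prolonged inside `C`. -/
def SegOpen {m : ℕ} (C : Set (Fin m → ℝ)) : Prop :=
  Convex ℝ C ∧ C.Nonempty ∧ ∀ x ∈ C, ∀ y ∈ C, ∃ ε > (0 : ℝ), x + ε • (x - y) ∈ C

theorem Convex.shrink {m : ℕ} {C : Set (Fin m → ℝ)} (hC : Convex ℝ C) {p v : Fin m → ℝ}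
    (hp : p ∈ C) {ε : ℝ} (hv : p + ε • v ∈ C) {δ : ℝ} (h0 : 0 < δ) (h1 : δ ≤ ε) :
    p + δ • v ∈ C := by
  have hε : 0 < ε := h0.trans_le h1
  have := hC.add_smul_mem hp hv (t := δ / ε) ⟨by positivity, (div_le_one hε).2 h1⟩
  rwa [smul_smul, div_mul_cancel₀ _ hε.ne'] at this

/-- The span of a relatively open convex set consists of the directions in which one can leave a
given point of it. -/
theorem SegOpen.mem_vectorSpan {m : ℕ} {C : Set (Fin m → ℝ)} (hC : SegOpen C) {p : Fin m → ℝ}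
    (hp : p ∈ C) (v : Fin m → ℝ) :
    v ∈ vectorSpan ℝ C ↔ ∃ ε > (0 : ℝ), p + ε • v ∈ C := by
  obtain ⟨hconv, -, hext⟩ := hC
  have hneg : ∀ v, (∃ ε > (0 : ℝ), p + ε • v ∈ C) → ∃ ε > (0 : ℝ), p + ε • (-v) ∈ C := by
    rintro v ⟨ε, hε, h⟩
    obtain ⟨δ, hδ, h'⟩ := hext p hp _ h
    refine ⟨δ * ε, by positivity, ?_⟩
    convert h' using 2
    rw [sub_add_cancel_left, smul_neg, smul_neg, smul_smul]
  have hpos : ∀ (c : ℝ) v, 0 < c → (∃ ε > (0 : ℝ), p + ε • v ∈ C) →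
      ∃ ε > (0 : ℝ), p + ε • (c • v) ∈ C := by
    rintro c v hc ⟨ε, hε, h⟩
    refine ⟨ε / c, by positivity, ?_⟩
    rwa [smul_smul, div_mul_cancel₀ _ hc.ne']
  have hzero : ∃ ε > (0 : ℝ), p + ε • (0 : Fin m → ℝ) ∈ C := ⟨1, one_pos, by simpa using hp⟩
  let M : Submodule ℝ (Fin m → ℝ) :=
    { carrier := {v | ∃ ε > (0 : ℝ), p + ε • v ∈ C}
      zero_mem' := hzero
      add_mem' := by
        rintro v w ⟨ε, hε, h⟩ ⟨δ, hδ, h'⟩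
        refine ⟨ε * δ / (ε + δ), by positivity, ?_⟩
        have := hconv h h' (a := δ / (ε + δ)) (b := ε / (ε + δ)) (by positivity) (by positivity)
          (by field_simp; ring)
        convert this using 1
        ext j
        simp only [Pi.add_apply, Pi.smul_apply, smul_eq_mul]
        field_simp
        ring
      smul_mem' := by
        intro c v hv
        rcases lt_trichotomy c 0 with hc | rfl | hc
        · have := hpos (-c) _ (by linarith) (hneg v hv)
          simpa using this
        · simpa using hzero
        · exact hpos c v hc hv }
  constructor
  · intro hv
    have hle : vectorSpan ℝ C ≤ M := by
      rw [vectorSpan_eq_span_vsub_set_right ℝ hp, Submodule.span_le]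
      rintro _ ⟨y, hy, rfl⟩
      exact ⟨1, one_pos, by simpa using hy⟩
    exact hle hv
  · rintro ⟨ε, hε, h⟩
    have h1 := vsub_mem_vectorSpan ℝ h hp
    have h2 := (vectorSpan ℝ C).smul_mem ε⁻¹ h1
    simpa [smul_smul, inv_mul_cancel₀ hε.ne'] using h2

theorem SegOpen.inter_subspace {m : ℕ} {C : Set (Fin m → ℝ)} (hC : SegOpen C) {p : Fin m → ℝ}
    (hp : p ∈ C) (W : Submodule ℝ (Fin m → ℝ)) :
    SegOpen (C ∩ {x | x - p ∈ W}) ∧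
      vectorSpan ℝ (C ∩ {x | x - p ∈ W}) = vectorSpan ℝ C ⊓ W := by
  have hpN : p ∈ C ∩ {x | x - p ∈ W} := ⟨hp, by simp⟩
  have hS : SegOpen (C ∩ {x | x - p ∈ W}) := by
    refine ⟨?_, ⟨p, hpN⟩, ?_⟩
    · refine hC.1.inter ?_
      intro x hx y hy a b ha hb hab
      have : a • x + b • y - p = a • (x - p) + b • (y - p) := by
        rw [smul_sub, smul_sub, sub_add_sub_comm, ← add_smul, hab, one_smul]
      rw [Set.mem_ofPred_eq, this]
      exact W.add_mem (W.smul_mem _ hx) (W.smul_mem _ hy)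
    · rintro x ⟨hx, hxW⟩ y ⟨hy, hyW⟩
      obtain ⟨ε, hε, h⟩ := hC.2.2 x hx y hy
      refine ⟨ε, hε, h, ?_⟩
      have : x + ε • (x - y) - p = (x - p) + ε • ((x - p) - (y - p)) := by
        rw [sub_sub_sub_cancel_right]; abel
      rw [Set.mem_ofPred_eq, this]
      exact W.add_mem hxW (W.smul_mem _ (W.sub_mem hxW hyW))
  refine ⟨hS, ?_⟩
  ext v
  rw [hS.mem_vectorSpan hpN, Submodule.mem_inf, hC.mem_vectorSpan hp]
  constructor
  · rintro ⟨ε, hε, h, hW⟩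
    refine ⟨⟨ε, hε, h⟩, ?_⟩
    rw [Set.mem_ofPred_eq, add_sub_cancel_left] at hW
    exact (Submodule.smul_mem_iff _ hε.ne').1 hW
  · rintro ⟨⟨ε, hε, h⟩, hW⟩
    refine ⟨ε, hε, h, ?_⟩
    rw [Set.mem_ofPred_eq, add_sub_cancel_left]
    exact W.smul_mem _ hW

theorem SegOpen.inter_halfspace {m : ℕ} {C : Set (Fin m → ℝ)} (hC : SegOpen C)
    (u : (Fin m → ℝ) →ₗ[ℝ] ℝ) (c : ℝ) (hne : (C ∩ {x | u x < c}).Nonempty) :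
    SegOpen (C ∩ {x | u x < c}) ∧ vectorSpan ℝ (C ∩ {x | u x < c}) = vectorSpan ℝ C := by
  have key : ∀ x ∈ C ∩ {x | u x < c}, ∀ v, (∃ ε > (0 : ℝ), x + ε • v ∈ C) →
      ∃ ε > (0 : ℝ), x + ε • v ∈ C ∩ {x | u x < c} := by
    rintro x ⟨hx, hxc⟩ v ⟨ε, hε, h⟩
    have hd : 0 < (c - u x) / (|u v| + 1) := by
      have : u x < c := hxc
      have : 0 < c - u x := by linarith
      positivity
    refine ⟨min ε ((c - u x) / (|u v| + 1)), lt_min hε hd,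
      hC.1.shrink hx h (lt_min hε hd) (min_le_left _ _), ?_⟩
    set δ := min ε ((c - u x) / (|u v| + 1))
    have h0 : 0 < δ := lt_min hε hd
    have h1 : δ * (|u v| + 1) ≤ c - u x := by
      have : δ ≤ (c - u x) / (|u v| + 1) := min_le_right _ _
      rwa [le_div_iff₀ (by positivity)] at this
    have h2 : δ * u v ≤ δ * |u v| := mul_le_mul_of_nonneg_left (le_abs_self _) h0.le
    rw [Set.mem_ofPred_eq, map_add, map_smul, smul_eq_mul]
    nlinarith
  have hS : SegOpen (C ∩ {x | u x < c}) :=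
    ⟨hC.1.inter (convex_halfSpace_lt u.isLinear c), hne, fun x hx y hy =>
      key x hx _ (hC.2.2 x hx.1 y hy.1)⟩
  refine ⟨hS, ?_⟩
  obtain ⟨p, hp⟩ := hne
  ext v
  rw [hS.mem_vectorSpan hp, hC.mem_vectorSpan hp.1]
  exact ⟨fun ⟨ε, hε, h⟩ => ⟨ε, hε, h.1⟩, key p hp v⟩

theorem finrank_inf_ker {m : ℕ} (U : Submodule ℝ (Fin m → ℝ)) (u : (Fin m → ℝ) →ₗ[ℝ] ℝ)
    (h : ∃ v ∈ U, u v ≠ 0) :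
    Module.finrank ℝ (U ⊓ LinearMap.ker u : Submodule ℝ (Fin m → ℝ)) + 1
      = Module.finrank ℝ U := by
  obtain ⟨v, hv, huv⟩ := h
  have h1 := Submodule.finrank_sup_add_finrank_inf_eq U (LinearMap.ker u)
  have h2 : Module.finrank ℝ (LinearMap.ker u) + 1 = Module.finrank ℝ (Fin m → ℝ) :=
    Module.Dual.finrank_ker_add_one_of_ne_zero (f := u) (by rintro rfl; simp at huv)
  have h3 : U ⊔ LinearMap.ker u = ⊤ := by
    rw [eq_top_iff]
    intro x _
    have : x = (u x / u v) • v + (x - (u x / u v) • v) := by abel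
    rw [this]
    refine Submodule.add_mem_sup (U.smul_mem _ hv) ?_
    rw [LinearMap.mem_ker, map_sub, map_smul, smul_eq_mul, div_mul_cancel₀ _ huv, sub_self]
  rw [h3, finrank_top] at h1
  omega

/-! ### Euler characteristic on convex sets -/

/-- `Good C e`: `C` is an empty, a relatively open convex, or a nonempty compact convex set, and
`e` is its Euler characteristic with compact supports. -/
def Good {m : ℕ} (C : Set (Fin m → ℝ)) (e : ℤ) : Prop :=
  (C = ∅ ∧ e = 0) ∨ (SegOpen C ∧ e = (-1) ^ Module.finrank ℝ (vectorSpan ℝ C)) ∨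
    (Convex ℝ C ∧ IsCompact C ∧ C.Nonempty ∧ e = 1)

/-- Fubini for one set: the Euler characteristic of `C` is that of its image under a linear
functional times the common Euler characteristic `b` of the nonempty fibres. -/
theorem Good.slice {m : ℕ} {C : Set (Fin m → ℝ)} {e : ℤ} (h : Good C e)
    (u : (Fin m → ℝ) →ₗ[ℝ] ℝ) :
    ∃ b eJ : ℤ, LineGood (u '' C) eJ ∧ e = b * eJ ∧
      ∀ t, Good (C ∩ {x | u x = t}) (b * ind (u '' C) t) := by
  have hemp : ∀ t, t ∉ u '' C → C ∩ {x | u x = t} = ∅ := by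
    intro t ht
    ext x
    simp only [Set.mem_inter_iff, Set.mem_ofPred_eq, Set.mem_empty_iff_false, iff_false]
    rintro ⟨hx, rfl⟩
    exact ht ⟨x, hx, rfl⟩
  rcases h with ⟨rfl, rfl⟩ | ⟨hC, rfl⟩ | ⟨hconv, hcomp, hne, rfl⟩
  · exact ⟨0, 0, Or.inl ⟨by simp, rfl⟩, by simp, fun t => Or.inl ⟨by simp, by simp⟩⟩
  · obtain ⟨x₀, hx₀⟩ := hC.2.1
    by_cases hconst : ∃ v ∈ vectorSpan ℝ C, u v ≠ 0
    · refine ⟨-(-1) ^ Module.finrank ℝ (vectorSpan ℝ C), -1,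
        Or.inr (Or.inl ⟨?_, ?_, ⟨u x₀, x₀, hx₀, rfl⟩, rfl⟩), by ring, ?_⟩
      · exact (hC.1.linear_image u).ordConnected
      · have hord := (hC.1.linear_image u).ordConnected
        obtain ⟨v, hv, huv⟩ : ∃ v ∈ vectorSpan ℝ C, 0 < u v := by
          obtain ⟨v, hv, huv⟩ := hconst
          rcases lt_or_gt_of_ne huv with h | h
          · exact ⟨-v, Submodule.neg_mem _ hv, by simpa using h⟩
          · exact ⟨v, hv, h⟩
        rw [isOpen_iff_mem_nhds]
        rintro _ ⟨x, hx, rfl⟩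
        obtain ⟨ε, hε, h1⟩ := (hC.mem_vectorSpan hx v).1 hv
        obtain ⟨δ, hδ, h2⟩ := (hC.mem_vectorSpan hx (-v)).1 (Submodule.neg_mem _ hv)
        refine Filter.mem_of_superset (Icc_mem_nhds ?_ ?_)
          (hord.out (Set.mem_image_of_mem u h2) (Set.mem_image_of_mem u h1))
        · simp only [map_add, map_smul, map_neg, smul_eq_mul]; nlinarith
        · simp only [map_add, map_smul, smul_eq_mul]; nlinarith
      · intro t
        by_cases ht : t ∈ u '' C
        · obtain ⟨x, hx, rfl⟩ := ht
          right; left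
          have hset : C ∩ {y | u y = u x} = C ∩ {y | y - x ∈ LinearMap.ker u} := by
            ext y; simp [sub_eq_zero]
          obtain ⟨h1, h2⟩ := hC.inter_subspace hx (LinearMap.ker u)
          rw [hset]
          refine ⟨h1, ?_⟩
          rw [h2, ind, if_pos ⟨x, hx, rfl⟩, ← finrank_inf_ker _ u hconst]
          ring
        · left
          exact ⟨hemp t ht, by rw [ind, if_neg ht, mul_zero]⟩
    · push Not at hconst
      have hval : ∀ x ∈ C, u x = u x₀ := fun x hx => by
        have := hconst _ (vsub_mem_vectorSpan ℝ hx hx₀)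
        rw [vsub_eq_sub, map_sub] at this
        linarith
      have him : u '' C = Set.Icc (u x₀) (u x₀) := by
        rw [Set.Icc_self]
        ext t
        constructor
        · rintro ⟨x, hx, rfl⟩; exact hval x hx
        · rintro rfl; exact ⟨x₀, hx₀, rfl⟩
      refine ⟨(-1) ^ Module.finrank ℝ (vectorSpan ℝ C), 1,
        Or.inr (Or.inr ⟨_, _, le_rfl, him, rfl⟩), by ring, fun t => ?_⟩
      by_cases ht : t ∈ u '' C
      · right; left
        have : C ∩ {x | u x = t} = C := by
          rw [him, Set.Icc_self] at ht
          exact Set.inter_eq_left.2 fun x hx => (hval x hx).trans ht.symm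
        rw [this, ind, if_pos ht, mul_one]
        exact ⟨hC, rfl⟩
      · left
        exact ⟨hemp t ht, by rw [ind, if_neg ht, mul_zero]⟩
  · have hcont : Continuous u := u.continuous_of_finiteDimensional
    refine ⟨1, 1, Or.inr (Or.inr ?_), by simp, fun t => ?_⟩
    · have hco : IsConnected (u '' C) := ⟨hne.image u, (hconv.linear_image u).isPreconnected⟩
      have hcc : IsCompact (u '' C) := hcomp.image hcont
      obtain ⟨y, hy⟩ := hne.image u
      exact ⟨_, _, (csInf_le hcc.bddBelow hy).trans (le_csSup hcc.bddAbove hy),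
        eq_Icc_of_connected_compact hco hcc, rfl⟩
    · by_cases ht : t ∈ u '' C
      · right; right
        refine ⟨hconv.inter (convex_hyperplane u.isLinear t),
          hcomp.inter_right (isClosed_eq hcont continuous_const), ?_,
          by rw [ind, if_pos ht, mul_one]⟩
        obtain ⟨x, hx, hxt⟩ := ht
        exact ⟨x, hx, hxt⟩
      · left
        exact ⟨hemp t ht, by rw [ind, if_neg ht, mul_zero]⟩

/-- The Euler characteristic respects linear relations between indicators. The number `k` bounds
the number of free coordinates of the sets involved, which allows induction by slicing. -/
theorem euler_relation_aux {m : ℕ} {ι : Type*} (s : Finset ι) (k : ℕ) (hk : k ≤ m) :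
    ∀ (c : Fin m → ℝ) (C : ι → Set (Fin m → ℝ)) (e a : ι → ℤ),
      (∀ i ∈ s, Good (C i) (e i)) → (∀ i ∈ s, ∀ x ∈ C i, ∀ j : Fin m, k ≤ j → x j = c j) →
      (∀ x, ∑ i ∈ s, a i * ind (C i) x = 0) → ∑ i ∈ s, a i * e i = 0 := by
  induction k with
  | zero =>
    intro c C e a hC hsub h0
    rw [← h0 c]
    refine Finset.sum_congr rfl fun i hi => ?_
    congr 1
    have hs : C i ⊆ {c} := fun x hx => funext fun j => hsub i hi x hx j (Nat.zero_le _)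
    have hmem : (C i).Nonempty → C i = {c} := fun hne => hne.subset_singleton_iff.1 hs
    rcases hC i hi with ⟨h, he⟩ | ⟨h, he⟩ | ⟨_, _, h, he⟩
    · rw [h, he, ind, if_neg (by simp)]
    · rw [he, hmem h.2.1, vectorSpan_singleton, ind, if_pos (by simp)]
      simp
    · rw [he, hmem h, ind, if_pos (by simp)]
  | succ k ih =>
    intro c C e a hC hsub h0
    set k' : Fin m := ⟨k, hk⟩
    let u : (Fin m → ℝ) →ₗ[ℝ] ℝ := LinearMap.proj k'
    have hsl := fun i : s => (hC i i.2).slice u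
    choose b eJ hJ he hsl' using hsl
    -- extend the data to all indices by zero
    let b' : ι → ℤ := fun i => if hi : i ∈ s then b ⟨i, hi⟩ else 0
    let e' : ι → ℤ := fun i => if hi : i ∈ s then eJ ⟨i, hi⟩ else 0
    have hb' : ∀ i (hi : i ∈ s), b' i = b ⟨i, hi⟩ := fun i hi => dif_pos hi
    have he' : ∀ i (hi : i ∈ s), e' i = eJ ⟨i, hi⟩ := fun i hi => dif_pos hi
    have hline : ∑ i ∈ s, (a i * b' i) * e' i = 0 := by
      refine line_relation s (fun i => u '' C i) e' (fun i => a i * b' i)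
        (fun i hi => ?_) (fun t => ?_)
      · rw [he' i hi]; exact hJ ⟨i, hi⟩
      · have := ih (by omega) (Function.update c k' t) (fun i => C i ∩ {x | u x = t})
          (fun i => b' i * ind (u '' C i) t) a (fun i hi => ?_) (fun i hi x hx j hj => ?_)
          (fun x => ?_)
        · simpa only [mul_assoc] using this
        · rw [hb' i hi]; exact hsl' ⟨i, hi⟩ t
        · by_cases hjk : j = k'
          · rw [hjk, Function.update_self]; exact hx.2
          · rw [Function.update_of_ne hjk]
            refine hsub i hi x hx.1 j ?_
            have : (j : ℕ) ≠ k := fun h => hjk (Fin.ext h)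
            omega
        · by_cases hx : u x = t
          · rw [← h0 x]
            refine Finset.sum_congr rfl fun i _ => ?_
            simp [ind, hx]
          · refine Finset.sum_eq_zero fun i _ => ?_
            simp [ind, hx]
    rw [← hline]
    refine Finset.sum_congr rfl fun i hi => ?_
    rw [hb' i hi, he' i hi, he ⟨i, hi⟩, mul_assoc]

theorem euler_relation {m : ℕ} {ι : Type*} (s : Finset ι) (C : ι → Set (Fin m → ℝ))
    (e a : ι → ℤ) (hC : ∀ i ∈ s, Good (C i) (e i))
    (h0 : ∀ x, ∑ i ∈ s, a i * ind (C i) x = 0) : ∑ i ∈ s, a i * e i = 0 :=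
  euler_relation_aux s m le_rfl 0 C e a hC
    (fun _ _ _ _ j hj => absurd j.2 (not_lt.2 hj)) h0


/-- The Euler characteristics of sets partitioning `A \ B`, where `B ⊆ A`, add up to that of `A`
minus that of `B`. -/
theorem euler_sum {m : ℕ} {ι : Type*} (s : Finset ι) (C : ι → Set (Fin m → ℝ)) (e : ι → ℤ)
    (hC : ∀ i ∈ s, Good (C i) (e i)) {A B : Set (Fin m → ℝ)} {α β : ℤ} (hA : Good A α)
    (hB : Good B β) (h : ∀ x, ∑ i ∈ s, ind (C i) x = ind A x - ind B x) :
    ∑ i ∈ s, e i = α - β := by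
  have := euler_relation (s.disjSum (Finset.univ : Finset Bool))
    (Sum.elim C fun b => if b then A else B) (Sum.elim e fun b => if b then α else β)
    (Sum.elim (fun _ => 1) fun b => if b then -1 else 1) ?_ ?_
  · simp only [Finset.sum_disjSum, Sum.elim_inl, Sum.elim_inr, Fintype.sum_bool, one_mul,
      if_true, Bool.false_eq_true, if_false] at this
    linarith
  · rintro (i | b) hi
    · exact hC i (by simpa using hi)
    · cases b
      · exact hB
      · exact hA
  · intro x
    simp only [Finset.sum_disjSum, Sum.elim_inl, Sum.elim_inr, Fintype.sum_bool, one_mul,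
      if_true, Bool.false_eq_true, if_false, h]
    ring

/-! ### The lemma of Farkas -/

/-- Farkas' lemma for linear functionals, by the algebraic induction on their number due to
Bartl. -/
theorem farkas_functionals {X ι : Type*} [AddCommGroup X] [Module ℝ X] (s : Finset ι) :
    ∀ (A : ι → X →ₗ[ℝ] ℝ) (b : X →ₗ[ℝ] ℝ),
      (∀ x, (∀ i ∈ s, A i x ≤ 0) → b x ≤ 0) →
      ∃ c : ι → ℝ, (∀ i ∈ s, 0 ≤ c i) ∧ b = ∑ i ∈ s, c i • A i := by
  induction s using Finset.induction_on with
  | empty =>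
    intro A b h
    refine ⟨0, by simp, ?_⟩
    ext x
    have h1 := h x (by simp)
    have h2 := h (-x) (by simp)
    rw [map_neg] at h2
    simp only [Finset.sum_empty, LinearMap.zero_apply]
    linarith
  | insert j s hj ih =>
    intro A b h
    by_cases hs : ∀ x, (∀ i ∈ s, A i x ≤ 0) → b x ≤ 0
    · obtain ⟨c, hc, hb⟩ := ih A b hs
      refine ⟨Function.update c j 0, fun i hi => ?_, ?_⟩
      · by_cases hij : i = j
        · rw [hij, Function.update_self]
        · rw [Function.update_of_ne hij]
          exact hc i ((Finset.mem_insert.1 hi).resolve_left hij)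
      · rw [Finset.sum_insert hj, Function.update_self, zero_smul, zero_add, hb]
        refine Finset.sum_congr rfl fun i hi => ?_
        rw [Function.update_of_ne (ne_of_mem_of_not_mem hi hj)]
    · push Not at hs
      obtain ⟨z, hz, hbz⟩ := hs
      have haz : 0 < A j z := by
        by_contra hcon
        push Not at hcon
        refine absurd (h z fun i hi => ?_) (not_le.2 hbz)
        rcases Finset.mem_insert.1 hi with rfl | hi
        · exact hcon
        · exact hz i hi
      -- eliminate `A j` by projecting along `z`
      obtain ⟨c, hc, hb⟩ := ih (fun i => A i - (A i z / A j z) • A j)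
        (b - (b z / A j z) • A j) (fun x hx => by
          have := h (x - (A j x / A j z) • z) (fun i hi => by
            rcases Finset.mem_insert.1 hi with rfl | hi
            · rw [map_sub, map_smul, smul_eq_mul, div_mul_cancel₀ _ haz.ne', sub_self]
            · have := hx i hi
              simp only [LinearMap.sub_apply, LinearMap.smul_apply, smul_eq_mul] at this
              rw [map_sub, map_smul, smul_eq_mul]
              calc _ = A i x - A i z / A j z * A j x := by ring
                _ ≤ 0 := this)
          rw [map_sub, map_smul, smul_eq_mul] at this
          simp only [LinearMap.sub_apply, LinearMap.smul_apply, smul_eq_mul]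
          calc _ = b x - A j x / A j z * b z := by ring
            _ ≤ 0 := this)
      refine ⟨Function.update c j (b z / A j z - ∑ i ∈ s, c i * (A i z / A j z)),
        fun i hi => ?_, ?_⟩
      · by_cases hij : i = j
        · rw [hij, Function.update_self]
          have h1 : 0 ≤ b z / A j z := by positivity
          have h2 : ∑ i ∈ s, c i * (A i z / A j z) ≤ 0 :=
            Finset.sum_nonpos fun i hi => mul_nonpos_of_nonneg_of_nonpos (hc i hi)
              (div_nonpos_of_nonpos_of_nonneg (hz i hi) haz.le)
          linarith
        · rw [Function.update_of_ne hij]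
          exact hc i ((Finset.mem_insert.1 hi).resolve_left hij)
      · rw [Finset.sum_insert hj, Function.update_self,
          Finset.sum_congr rfl (fun i hi => by
            rw [Function.update_of_ne (ne_of_mem_of_not_mem hi hj)] :
            ∀ i ∈ s, _ = c i • A i)]
        have hb2 := sub_eq_iff_eq_add.1 hb
        generalize b z / A j z = β at hb2 ⊢
        rw [hb2]
        ext x
        simp only [LinearMap.add_apply, LinearMap.sum_apply, LinearMap.smul_apply,
          LinearMap.sub_apply, smul_eq_mul, mul_sub, Finset.sum_sub_distrib, sub_mul,
          Finset.sum_mul, mul_assoc]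
        ring

theorem farkas_vectors {m : ℕ} (S : Finset (Fin m → ℝ)) (x b : Fin m → ℝ)
    (h : ∀ u : (Fin m → ℝ) →ₗ[ℝ] ℝ, (∀ s ∈ S, u s ≤ u x) → u b ≤ 0) :
    ∃ c : (Fin m → ℝ) → ℝ, (∀ s ∈ S, 0 ≤ c s) ∧ b = ∑ s ∈ S, c s • (s - x) := by
  obtain ⟨c, hc, hb⟩ := farkas_functionals S
    (fun s => Module.Dual.eval ℝ (Fin m → ℝ) (s - x)) (Module.Dual.eval ℝ (Fin m → ℝ) b)
    (fun u hu => h u fun s hs => by simpa using hu s hs)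
  refine ⟨c, hc, ?_⟩
  have : Module.Dual.eval ℝ (Fin m → ℝ) b
      = Module.Dual.eval ℝ (Fin m → ℝ) (∑ s ∈ S, c s • (s - x)) := by
    rw [hb, map_sum]
    simp
  exact Module.eval_apply_injective ℝ this

/-! ### Faces and their relative interiors -/

theorem faceDim_eq {m : ℕ} (F : Set (Fin m → ℝ)) :
    faceDim F = Module.finrank ℝ (vectorSpan ℝ F) := by
  rw [faceDim, direction_affineSpan]

theorem IsFaceOf.subset {m : ℕ} {P F : Set (Fin m → ℝ)} (h : IsFaceOf P F) : F ⊆ P := by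
  rcases h with rfl | ⟨_, u, rfl⟩
  · exact subset_rfl
  · exact fun x hx => hx.1

theorem IsFaceOf.nonempty {m : ℕ} {P F : Set (Fin m → ℝ)} (h : IsFaceOf P F)
    (hP : P.Nonempty) : F.Nonempty := by
  rcases h with rfl | ⟨h, _⟩
  · exact hP
  · exact h

theorem IsFaceOf.extreme {m : ℕ} {P F : Set (Fin m → ℝ)} (h : IsFaceOf P F)
    {x y : Fin m → ℝ} (hx : x ∈ P) (hy : y ∈ P) {a b : ℝ} (ha : 0 < a) (hb : 0 < b)
    (hab : a + b = 1) (hz : a • x + b • y ∈ F) : x ∈ F := by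
  rcases h with rfl | ⟨_, u, rfl⟩
  · exact hx
  · refine ⟨hx, fun p hp => ?_⟩
    have h1 := hz.2 p hp
    have h2 := hz.2 y hy
    rw [map_add, map_smul, map_smul, smul_eq_mul, smul_eq_mul] at h1 h2
    have hb' : b = 1 - a := by linarith
    subst hb'
    have : a * u y ≤ a * u x := by linarith
    have h3 : u y ≤ u x := le_of_mul_le_mul_left this ha
    nlinarith

theorem IsFaceOf.convex {m : ℕ} {P F : Set (Fin m → ℝ)} (h : IsFaceOf P F)
    (hP : Convex ℝ P) : Convex ℝ F := by
  rcases h with rfl | ⟨_, u, rfl⟩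
  · exact hP
  · intro x hx y hy a b ha hb hab
    refine ⟨hP hx.1 hy.1 ha hb hab, fun p hp => ?_⟩
    have h1 := mul_le_mul_of_nonneg_left (hx.2 p hp) ha
    have h2 := mul_le_mul_of_nonneg_left (hy.2 p hp) hb
    rw [map_add, map_smul, map_smul, smul_eq_mul, smul_eq_mul]
    calc u p = a * u p + b * u p := by rw [← add_mul, hab, one_mul]
      _ ≤ _ := add_le_add h1 h2

theorem IsFaceOf.isCompact {m : ℕ} {P F : Set (Fin m → ℝ)} (h : IsFaceOf P F)
    (hP : IsCompact P) : IsCompact F := by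
  rcases h with rfl | ⟨_, u, rfl⟩
  · exact hP
  · have hcont : Continuous u := u.continuous_of_finiteDimensional
    have : {x | x ∈ P ∧ ∀ p ∈ P, u p ≤ u x} = P ∩ ⋂ p ∈ P, {x | u p ≤ u x} := by
      ext x; simp
    rw [this]
    exact hP.inter_right (isClosed_biInter fun p _ => isClosed_le continuous_const hcont)

theorem IsFaceOf.inter {m : ℕ} {P F G : Set (Fin m → ℝ)} (hF : IsFaceOf P F)
    (hG : IsFaceOf P G) (hne : (F ∩ G).Nonempty) : IsFaceOf P (F ∩ G) := by
  have hF' := hF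
  rcases hF with rfl | ⟨_, u, rfl⟩
  · rw [Set.inter_eq_right.2 hG.subset]; exact hG
  rcases hG with rfl | ⟨_, v, rfl⟩
  · rw [Set.inter_eq_left.2 hF'.subset]; exact hF'
  refine Or.inr ⟨hne, u + v, ?_⟩
  obtain ⟨z, hz⟩ := hne
  ext x
  constructor
  · rintro ⟨hx, hx'⟩
    exact ⟨hx.1, fun p hp => add_le_add (hx.2 p hp) (hx'.2 p hp)⟩
  · rintro ⟨hx, hx'⟩
    have h1 := hx' z hz.1.1
    have h2 := hz.1.2 x hx
    have h3 := hz.2.2 x hx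
    simp only [LinearMap.add_apply] at h1
    exact ⟨⟨hx, fun p hp => by linarith [hz.1.2 p hp]⟩,
      ⟨hx, fun p hp => by linarith [hz.2.2 p hp]⟩⟩

theorem IsFaceOf.dim_lt {m : ℕ} {P D E : Set (Fin m → ℝ)} (hP : P.Nonempty)
    (hD : IsFaceOf P D) (hE : IsFaceOf P E) (h : D ⊂ E) : faceDim D < faceDim E := by
  rw [faceDim_eq, faceDim_eq]
  refine Submodule.finrank_lt_finrank_of_lt (lt_of_le_of_ne (vectorSpan_mono ℝ h.1) ?_)
  intro heq
  obtain ⟨d, hd⟩ := hD.nonempty hP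
  rcases hD with rfl | ⟨_, u, hu⟩
  · exact h.2 hE.subset
  · -- the functional exposing `D` is constant on the span of `D`, hence on `E`
    have hker : vectorSpan ℝ D ≤ LinearMap.ker u := by
      rw [vectorSpan_eq_span_vsub_set_right ℝ hd, Submodule.span_le]
      rintro _ ⟨y, hy, rfl⟩
      rw [hu] at hy hd
      have h1 := hy.2 d hd.1
      have h2 := hd.2 y hy.1
      simp only [vsub_eq_sub, SetLike.mem_coe, LinearMap.mem_ker, map_sub]
      linarith
    apply h.2
    intro y hy
    have hyd : y -ᵥ d ∈ vectorSpan ℝ D := heq ▸ vsub_mem_vectorSpan ℝ hy (h.1 hd)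
    have := hker hyd
    rw [vsub_eq_sub, LinearMap.mem_ker, map_sub] at this
    rw [hu] at hd ⊢
    exact ⟨hE.subset hy, fun p hp => by linarith [hd.2 p hp]⟩

/-- The relative interior of the face `E` of `P`: the points of `E` for which `E` is the smallest
face of `P` containing them. -/
def cell {m : ℕ} (P E : Set (Fin m → ℝ)) : Set (Fin m → ℝ) :=
  {x | x ∈ E ∧ ∀ G, IsFaceOf P G → x ∈ G → E ⊆ G}

theorem cell_mix {m : ℕ} {P E : Set (Fin m → ℝ)} (hP : Convex ℝ P) (hE : IsFaceOf P E)
    {x y : Fin m → ℝ} (hx : x ∈ cell P E) (hy : y ∈ E) {a b : ℝ} (ha : 0 < a) (hb : 0 ≤ b)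
    (hab : a + b = 1) : a • x + b • y ∈ cell P E := by
  rcases hb.eq_or_lt with rfl | hb
  · have : a = 1 := by linarith
    simpa [this] using hx
  · exact ⟨hE.convex hP hx.1 hy ha.le hb.le hab, fun G hG hz =>
      hx.2 G hG (hG.extreme (hE.subset hx.1) (hE.subset hy) ha hb hab hz)⟩

theorem exists_mem_cell {m : ℕ} {P : Set (Fin m → ℝ)}
    (hfin : {F : Set (Fin m → ℝ) | IsFaceOf P F}.Finite) {x : Fin m → ℝ} (hx : x ∈ P) :
    ∃ E, IsFaceOf P E ∧ x ∈ cell P E := by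
  have hfin' : {F : Set (Fin m → ℝ) | IsFaceOf P F ∧ x ∈ F}.Finite :=
    hfin.subset fun F hF => hF.1
  obtain ⟨E, hE⟩ := hfin'.exists_minimal ⟨P, Or.inl rfl, hx⟩
  refine ⟨E, hE.1.1, hE.1.2, fun G hG hxG => ?_⟩
  have hmem : IsFaceOf P (E ∩ G) ∧ x ∈ E ∩ G :=
    ⟨hE.1.1.inter hG ⟨x, hE.1.2, hxG⟩, hE.1.2, hxG⟩
  exact (hE.2 hmem Set.inter_subset_left).trans Set.inter_subset_right

theorem cell_unique {m : ℕ} {P E G : Set (Fin m → ℝ)} (hE : IsFaceOf P E) (hG : IsFaceOf P G)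
    {x : Fin m → ℝ} (h1 : x ∈ cell P E) (h2 : x ∈ cell P G) : E = G :=
  (h1.2 G hG h2.1).antisymm (h2.2 E hE h1.1)

theorem cell_nonempty {m : ℕ} {P E : Set (Fin m → ℝ)} (hP : Convex ℝ P) (hne : P.Nonempty)
    (hfin : {F : Set (Fin m → ℝ) | IsFaceOf P F}.Finite) (hE : IsFaceOf P E) :
    (cell P E).Nonempty := by
  have key : ∀ s : Finset (Set (Fin m → ℝ)), (∀ G ∈ s, IsFaceOf P G ∧ ¬ E ⊆ G) →
      ∃ x ∈ E, ∀ G ∈ s, x ∉ G := by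
    intro s
    induction s using Finset.induction_on with
    | empty => intro _; obtain ⟨x, hx⟩ := hE.nonempty hne; exact ⟨x, hx, by simp⟩
    | insert G s _ ih =>
      intro hs
      obtain ⟨x, hx, hxs⟩ := ih fun H hH => hs H (Finset.mem_insert_of_mem hH)
      obtain ⟨hG, hEG⟩ := hs G (Finset.mem_insert_self _ _)
      obtain ⟨y, hy, hyG⟩ := Set.not_subset.1 hEG
      refine ⟨(1 / 2 : ℝ) • x + (1 / 2 : ℝ) • y, hE.convex hP hx hy (by norm_num)
        (by norm_num) (by norm_num), fun H hH hmem => ?_⟩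
      rcases Finset.mem_insert.1 hH with rfl | hH'
      · rw [add_comm] at hmem
        exact hyG (hG.extreme (hE.subset hy) (hE.subset hx) (by norm_num) (by norm_num)
          (by norm_num) hmem)
      · exact hxs H hH' ((hs H hH).1.extreme (hE.subset hx) (hE.subset hy) (by norm_num)
          (by norm_num) (by norm_num) hmem)
  obtain ⟨x, hx, hxs⟩ := key (hfin.toFinset.filter fun G => ¬ E ⊆ G) (by simp)
  refine ⟨x, hx, fun G hG hxG => ?_⟩
  by_contra hcon
  exact hxs G (by simp [hcon, hG]) hxG

/-- Relative interiors of faces of a polytope are relatively open; this is where finite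
generation enters, through Farkas' lemma. -/
theorem cell_segOpen {m : ℕ} {P E : Set (Fin m → ℝ)} {S : Finset (Fin m → ℝ)}
    (hS : S.Nonempty) (hPS : P = convexHull ℝ (S : Set (Fin m → ℝ)))
    (hfin : {F : Set (Fin m → ℝ) | IsFaceOf P F}.Finite) (hE : IsFaceOf P E) :
    SegOpen (cell P E) := by
  have hP : Convex ℝ P := hPS ▸ convex_convexHull ℝ _
  have hSP : ∀ s ∈ S, s ∈ P := fun s hs => hPS ▸ subset_convexHull ℝ _ hs
  have hne : P.Nonempty := hS.imp hSP
  refine ⟨fun x hx y hy a b ha hb hab => ?_, cell_nonempty hP hne hfin hE, ?_⟩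
  · rcases ha.eq_or_lt with rfl | ha
    · have : b = 1 := by linarith
      simpa [this] using hy
    · exact cell_mix hP hE hx hy.1 ha hb hab
  intro x hx y hy
  suffices h : ∃ ε > (0 : ℝ), x + ε • (x - y) ∈ P by
    obtain ⟨ε, hε, h⟩ := h
    have hext : ∀ G, IsFaceOf P G → x ∈ G → x + ε • (x - y) ∈ G := fun G hG hxG => by
      refine hG.extreme h (hE.subset hy.1) (a := 1 / (1 + ε)) (b := ε / (1 + ε))
        (by positivity) (by positivity) (by field_simp) ?_
      convert hxG using 1
      ext j
      simp only [Pi.add_apply, Pi.smul_apply, Pi.sub_apply, smul_eq_mul]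
      field_simp
      ring
    have hzE := hext E hE hx.1
    refine ⟨ε / 2, by positivity, ?_⟩
    have := cell_mix hP hE hx hzE (a := 1 / 2) (b := 1 / 2) (by norm_num) (by norm_num)
      (by norm_num)
    convert this using 1
    ext j
    simp only [Pi.add_apply, Pi.smul_apply, Pi.sub_apply, smul_eq_mul]
    ring
  obtain ⟨c, hc, hb⟩ := farkas_vectors S x (x - y) (fun u hu => by
    have hmax : ∀ p ∈ P, u p ≤ u x := by
      have hsub : P ⊆ {p | u p ≤ u x} := by
        rw [hPS]
        exact convexHull_min (fun s hs => hu s hs) (convex_halfSpace_le u.isLinear _)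
      exact fun p hp => hsub hp
    have hxG : x ∈ {z | z ∈ P ∧ ∀ p ∈ P, u p ≤ u z} := ⟨hE.subset hx.1, hmax⟩
    have hG : IsFaceOf P {z | z ∈ P ∧ ∀ p ∈ P, u p ≤ u z} := Or.inr ⟨⟨x, hxG⟩, u, rfl⟩
    have hyG := hx.2 _ hG hxG hy.1
    have := hyG.2 x hxG.1
    rw [map_sub]
    linarith)
  rcases (Finset.sum_nonneg hc).eq_or_lt with h0 | hpos
  · have hz : ∀ s ∈ S, c s = 0 := (Finset.sum_eq_zero_iff_of_nonneg hc).1 h0.symm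
    have hxy : x - y = 0 := by
      rw [hb]
      exact Finset.sum_eq_zero fun s hs => by rw [hz s hs, zero_smul]
    exact ⟨1, one_pos, by rw [hxy]; simpa using hE.subset hx.1⟩
  · set Λ := ∑ s ∈ S, c s with hΛ
    refine ⟨1 / Λ, by positivity, ?_⟩
    have hmem := hP.sum_mem (t := S) (w := fun s => c s / Λ) (z := fun s => s)
      (fun s hs => div_nonneg (hc s hs) hpos.le)
      (by rw [← Finset.sum_div, ← hΛ, div_self hpos.ne']) hSP
    convert hmem using 1
    rw [hb]
    simp only [smul_sub, Finset.sum_sub_distrib, ← Finset.sum_smul, ← hΛ, Finset.smul_sum,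
      smul_smul, one_div, inv_mul_cancel₀ hpos.ne', one_smul]
    rw [add_sub_cancel]
    exact Finset.sum_congr rfl fun s _ => by rw [div_eq_inv_mul]

theorem vectorSpan_cell {m : ℕ} {P E : Set (Fin m → ℝ)} (hP : Convex ℝ P)
    (hE : IsFaceOf P E) (hne : (cell P E).Nonempty) :
    vectorSpan ℝ (cell P E) = vectorSpan ℝ E := by
  refine le_antisymm (vectorSpan_mono ℝ fun x hx => hx.1) ?_
  obtain ⟨x, hx⟩ := hne
  rw [vectorSpan_eq_span_vsub_set_right ℝ hx.1, Submodule.span_le]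
  rintro _ ⟨y, hy, rfl⟩
  have hmid := cell_mix hP hE hx hy (a := 1 / 2) (b := 1 / 2) (by norm_num) (by norm_num)
    (by norm_num)
  have := (vectorSpan ℝ (cell P E)).smul_mem (2 : ℝ) (vsub_mem_vectorSpan ℝ hmid hx)
  have heq : y - x = (2 : ℝ) • ((1 / 2 : ℝ) • x + (1 / 2 : ℝ) • y -ᵥ x) := by
    ext j
    simp only [vsub_eq_sub, Pi.add_apply, Pi.smul_apply, Pi.sub_apply, smul_eq_mul]
    ring
  change y - x ∈ vectorSpan ℝ (cell P E)
  rwa [heq]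

/-- A face, intersected with any set `T`, is partitioned by the relative interiors of its
subfaces. -/
theorem sum_ind_cell {m : ℕ} {P F : Set (Fin m → ℝ)}
    (hfin : {F : Set (Fin m → ℝ) | IsFaceOf P F}.Finite) (hF : IsFaceOf P F)
    (T : Set (Fin m → ℝ)) (x : Fin m → ℝ) :
    ∑ E ∈ hfin.toFinset.filter (fun E => E ⊆ F), ind (cell P E ∩ T) x = ind (F ∩ T) x := by
  by_cases hx : x ∈ F ∩ T
  · obtain ⟨E, hE, hxE⟩ := exists_mem_cell hfin (hF.subset hx.1)
    rw [Finset.sum_eq_single_of_mem E (by simp [hE, hxE.2 F hF hx.1])]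
    · rw [ind, ind, if_pos hx, if_pos ⟨hxE, hx.2⟩]
    · intro G hG hne
      rw [ind, if_neg]
      rintro ⟨h, _⟩
      simp only [Finset.mem_filter, Set.Finite.mem_toFinset, Set.mem_ofPred_eq] at hG
      exact hne (cell_unique hG.1 hE h hxE)
  · rw [ind, if_neg hx]
    refine Finset.sum_eq_zero fun E hE => ?_
    rw [ind, if_neg]
    rintro ⟨h, h'⟩
    exact hx ⟨(Finset.mem_filter.1 hE).2 h.1, h'⟩


/-! ### The face lattice is Eulerian -/

/-- Euler's formula for the face `F`: it is compact, with Euler characteristic `1`, and is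
partitioned by the relative interiors of its subfaces. -/
theorem sum_faces_eq_one {m : ℕ} {P F : Set (Fin m → ℝ)} {S : Finset (Fin m → ℝ)}
    (hS : S.Nonempty) (hPS : P = convexHull ℝ (S : Set (Fin m → ℝ)))
    (hfin : {F : Set (Fin m → ℝ) | IsFaceOf P F}.Finite) (hF : IsFaceOf P F) :
    ∑ E ∈ hfin.toFinset.filter (fun E => E ⊆ F), (-1 : ℤ) ^ faceDim E = 1 := by
  have hP : Convex ℝ P := hPS ▸ convex_convexHull ℝ _
  have hne : P.Nonempty := hPS ▸ (Finset.coe_nonempty.2 hS).convexHull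
  have hcomp : IsCompact P := hPS ▸ S.finite_toSet.isCompact_convexHull ℝ
  have := euler_sum (hfin.toFinset.filter fun E => E ⊆ F) (fun E => cell P E ∩ Set.univ)
    (fun E => (-1 : ℤ) ^ faceDim E) (A := F ∩ Set.univ) (B := ∅) (α := 1) (β := 0) ?_ ?_
    (Or.inl ⟨rfl, rfl⟩) ?_
  · simpa using this
  · intro E hE
    have hE' : IsFaceOf P E := by simpa using (Finset.mem_filter.1 hE).1
    have hC := cell_segOpen hS hPS hfin hE'
    right; left
    rw [Set.inter_univ, vectorSpan_cell hP hE' hC.2.1, faceDim_eq]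
    exact ⟨hC, rfl⟩
  · rw [Set.inter_univ]
    exact Or.inr (Or.inr ⟨hF.convex hP, hF.isCompact hcomp, hF.nonempty hne, rfl⟩)
  · intro x
    rw [sum_ind_cell hfin hF]
    simp [ind]

/-- Suitably combining a relative interior point `q` of a face `E ⊇ D` with a point of `D` near `p`,
one reaches the transversal `p + W` without leaving the relative interior of `E`. -/
theorem exists_transversal {m : ℕ} {P D E : Set (Fin m → ℝ)} (hP : Convex ℝ P)
    (hDo : SegOpen (cell P D)) (hD : IsFaceOf P D) (hE : IsFaceOf P E) (hDE : D ⊆ E)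
    {W : Submodule ℝ (Fin m → ℝ)} (hW : IsCompl (vectorSpan ℝ D) W) {p q : Fin m → ℝ}
    (hp : p ∈ cell P D) (hq : q ∈ cell P E) :
    ∃ z ∈ cell P E, z - p ∈ W ∧ ∃ r > (0 : ℝ), ∃ d ∈ vectorSpan ℝ D,
      z - p = r • (q - p) - d := by
  obtain ⟨d, hd, w, hw, hdw⟩ : ∃ d ∈ vectorSpan ℝ D, ∃ w ∈ W, d + w = q - p := by
    rw [← Submodule.mem_sup, hW.sup_eq_top]; trivial
  obtain ⟨δ, hδ, hmem⟩ := (hDo.mem_vectorSpan hp (-d)).1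
    (by rw [vectorSpan_cell hP hD hDo.2.1]; exact Submodule.neg_mem _ hd)
  have hz := cell_mix hP hE hq (hDE hmem.1) (a := δ / (1 + δ)) (b := 1 / (1 + δ))
    (by positivity) (by positivity) (by field_simp; ring)
  have hzp : (δ / (1 + δ)) • q + (1 / (1 + δ)) • (p + δ • -d) - p
      = (δ / (1 + δ)) • (q - p) - (δ / (1 + δ)) • d := by
    ext j
    simp only [Pi.add_apply, Pi.smul_apply, Pi.sub_apply, Pi.neg_apply, smul_eq_mul]
    field_simp
    ring
  refine ⟨_, hz, ?_, δ / (1 + δ), by positivity, _, Submodule.smul_mem _ (δ / (1 + δ)) hd, hzp⟩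
  rw [hzp, ← hdw, ← smul_sub, add_sub_cancel_left]
  exact W.smul_mem _ hw

theorem finrank_inf_compl {m : ℕ} {M U W : Submodule ℝ (Fin m → ℝ)} (hMU : M ≤ U)
    (hW : IsCompl M W) :
    Module.finrank ℝ (U ⊓ W : Submodule ℝ (Fin m → ℝ)) + Module.finrank ℝ M
      = Module.finrank ℝ U := by
  have h := Submodule.finrank_sup_add_finrank_inf_eq M (W ⊓ U)
  rw [← sup_inf_assoc_of_le W hMU, hW.sup_eq_top, top_inf_eq, ← inf_assoc, hW.inf_eq_bot,
    bot_inf_eq, finrank_bot, inf_comm] at h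
  omega

/-- The interval `[D, F]` for a nonempty face `D`: a thin slab of the section of `F` by a
transversal to `D`, open on the far side, has Euler characteristic zero. -/
theorem sum_faces_eq_zero {m : ℕ} {P D F : Set (Fin m → ℝ)} {S : Finset (Fin m → ℝ)}
    (hS : S.Nonempty) (hPS : P = convexHull ℝ (S : Set (Fin m → ℝ)))
    (hfin : {F : Set (Fin m → ℝ) | IsFaceOf P F}.Finite) (hD : IsFaceOf P D)
    (hF : IsFaceOf P F) (hDF : D ⊂ F) :
    ∑ E ∈ (hfin.toFinset.filter (fun E => E ⊆ F)).filter (fun E => D ⊆ E),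
      (-1 : ℤ) ^ faceDim E = 0 := by
  have hP : Convex ℝ P := hPS ▸ convex_convexHull ℝ _
  have hcomp : IsCompact P := hPS ▸ S.finite_toSet.isCompact_convexHull ℝ
  have hseg := fun E (hE : IsFaceOf P E) => cell_segOpen hS hPS hfin hE
  have hDo := hseg D hD
  obtain ⟨p, hp⟩ := hDo.2.1
  obtain ⟨W, hW⟩ := Submodule.exists_isCompl (vectorSpan ℝ D)
  -- `v` is minimal on `P` exactly along `D`
  obtain ⟨v, hv⟩ : ∃ v : (Fin m → ℝ) →ₗ[ℝ] ℝ, ∀ x ∈ P, v p ≤ v x ∧ (v x = v p ↔ x ∈ D) := by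
    rcases hD with rfl | ⟨_, u, hu⟩
    · exact absurd hF.subset hDF.2
    · refine ⟨-u, fun x hx => ?_⟩
      have hpD := hp.1
      rw [hu] at hpD
      have h1 := hpD.2 x hx
      simp only [LinearMap.neg_apply]
      refine ⟨by linarith, fun h => ?_, fun h => ?_⟩
      · rw [hu]
        exact ⟨hx, fun y hy => by linarith [hpD.2 y hy]⟩
      · rw [hu] at h
        linarith [h.2 p hpD.1]
  have hpP : p ∈ P := hD.subset hp.1
  have hvD : ∀ d ∈ vectorSpan ℝ D, v d = 0 := by
    intro d hd
    have hle : vectorSpan ℝ D ≤ LinearMap.ker v := by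
      rw [vectorSpan_eq_span_vsub_set_right ℝ hp.1, Submodule.span_le]
      rintro _ ⟨y, hy, rfl⟩
      have := (hv y (hD.subset hy)).2.2 hy
      simp [this]
    exact hle hd
  have hcont : Continuous v := v.continuous_of_finiteDimensional
  have hNclosed : IsClosed {x : Fin m → ℝ | x - p ∈ W} :=
    W.closed_of_finiteDimensional.preimage (continuous_id.sub continuous_const)
  have hNconv : Convex ℝ {x : Fin m → ℝ | x - p ∈ W} := by
    intro x hx y hy a b ha hb hab
    have : a • x + b • y - p = a • (x - p) + b • (y - p) := by
      rw [smul_sub, smul_sub, sub_add_sub_comm, ← add_smul, hab, one_smul]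
    rw [Set.mem_ofPred_eq, this]
    exact W.add_mem (W.smul_mem _ hx) (W.smul_mem _ hy)
  -- a point of the section of `F` off `D`
  obtain ⟨q, hq⟩ := (hseg F hF).2.1
  obtain ⟨z, hz, hzW, r, hr, d, hd, hzd⟩ := exists_transversal hP hDo hD hF hDF.1 hW hp hq
  have hzv : 0 < v z - v p := by
    rw [← map_sub, hzd, map_sub, hvD d hd, sub_zero, map_smul, map_sub, smul_eq_mul]
    have hqP := hF.subset hq.1
    have hqD : q ∉ D := fun h => hDF.2 (hq.2 D hD h)
    have : v p < v q := lt_of_le_of_ne (hv q hqP).1 fun h => hqD ((hv q hqP).2.1 h.symm)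
    exact mul_pos hr (by linarith)
  -- the slab is thin enough to avoid the faces that do not contain `D`
  obtain ⟨ε, ⟨hε, hεz⟩, hεE⟩ : ∃ ε, ε ∈ Set.Ioo 0 (v z - v p) ∧
      ∀ E ∈ hfin.toFinset, ¬ D ⊆ E → ∀ x ∈ E, x - p ∈ W → v p + ε ≤ v x := by
    have hev : ∀ᶠ ε in nhdsWithin (0 : ℝ) (Set.Ioi 0), ∀ E ∈ hfin.toFinset,
        ¬ D ⊆ E → ∀ x ∈ E, x - p ∈ W → v p + ε ≤ v x := by
      refine (Filter.eventually_all_finset _).2 fun E hE => ?_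
      have hE' : IsFaceOf P E := by simpa using hE
      by_cases hDE : D ⊆ E
      · exact Filter.Eventually.of_forall fun _ h => absurd hDE h
      by_cases hne : (E ∩ {x | x - p ∈ W}).Nonempty
      · obtain ⟨x₀, hx₀, hmin⟩ := ((hE'.isCompact hcomp).inter_right hNclosed).exists_isMinOn
          hne hcont.continuousOn
        have hx₀P := hE'.subset hx₀.1
        have hlt : v p < v x₀ := by
          refine lt_of_le_of_ne (hv x₀ hx₀P).1 fun h => hDE ?_
          have hx₀D : x₀ ∈ D := (hv x₀ hx₀P).2.1 h.symm
          have h0 : x₀ - p ∈ vectorSpan ℝ D ⊓ W := ⟨vsub_mem_vectorSpan ℝ hx₀D hp.1, hx₀.2⟩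
          rw [hW.inf_eq_bot, Submodule.mem_bot, sub_eq_zero] at h0
          exact hp.2 E hE' (h0 ▸ hx₀.1)
        filter_upwards [Ioo_mem_nhdsGT (show 0 < v x₀ - v p by linarith)] with ε hε _ x hx hxW
        have : v x₀ ≤ v x := hmin ⟨hx, hxW⟩
        linarith [hε.2]
      · exact Filter.Eventually.of_forall fun _ _ x hx hxW => absurd ⟨x, hx, hxW⟩ hne
    obtain ⟨ε, h1, h2⟩ := (hev.and (Ioo_mem_nhdsGT hzv)).exists
    exact ⟨ε, h2, h1⟩
  -- points of the section scaled towards `p`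
  have hscale : ∀ E, IsFaceOf P E → D ⊆ E → ∀ y ∈ cell P E, y - p ∈ W → ∀ t : ℝ, 0 < t →
      t ≤ 1 → t • y + (1 - t) • p ∈ cell P E ∧ t • y + (1 - t) • p - p ∈ W ∧
        v (t • y + (1 - t) • p) = v p + t * (v y - v p) := by
    intro E hE hDE y hy hyW t ht ht1
    refine ⟨cell_mix hP hE hy (hDE hp.1) ht (by linarith) (by ring), ?_, ?_⟩
    · have : t • y + (1 - t) • p - p = t • (y - p) := by
        rw [sub_smul, one_smul, smul_sub]; abel
      rw [this]
      exact W.smul_mem _ hyW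
    · rw [map_add, map_smul, map_smul, smul_eq_mul, smul_eq_mul]; ring
  set c := v p + ε with hc
  obtain ⟨y, hyF, hyW, hyv⟩ : ∃ y ∈ F, y - p ∈ W ∧ v y = c := by
    obtain ⟨h1, h2, h3⟩ := hscale F hF hDF.1 z hz hzW (ε / (v z - v p)) (by positivity)
      ((div_le_one hzv).2 hεz.le)
    exact ⟨_, h1.1, h2, by rw [h3, div_mul_cancel₀ _ hzv.ne']⟩
  have hFc := hF.isCompact hcomp
  have hFv := hF.convex hP
  have hmain := euler_sum (hfin.toFinset.filter fun E => E ⊆ F)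
    (fun E => cell P E ∩ ({x | x - p ∈ W} ∩ {x | v x < c}))
    (fun E => if D ⊆ E then (-1 : ℤ) ^ (faceDim E + faceDim D) else 0)
    (A := F ∩ ({x | x - p ∈ W} ∩ {x | v x ≤ c})) (B := F ∩ ({x | x - p ∈ W} ∩ {x | v x = c}))
    (α := 1) (β := 1) ?_ ?_ ?_ ?_
  · rw [sub_self, ← Finset.sum_filter] at hmain
    have h2 : (-1 : ℤ) ^ faceDim D * (-1) ^ faceDim D = 1 := by
      rw [← mul_pow]; norm_num
    calc _ = ∑ E ∈ (hfin.toFinset.filter (fun E => E ⊆ F)).filter (fun E => D ⊆ E),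
          (-1 : ℤ) ^ (faceDim E + faceDim D) * (-1) ^ faceDim D := by
          refine Finset.sum_congr rfl fun E _ => ?_
          rw [pow_add, mul_assoc, h2, mul_one]
      _ = 0 := by rw [← Finset.sum_mul, hmain, zero_mul]
  · intro E hE
    have hE' : IsFaceOf P E := by simpa using (Finset.mem_filter.1 hE).1
    by_cases hDE : D ⊆ E
    · right; left
      rw [if_pos hDE]
      have hEo := hseg E hE'
      obtain ⟨q, hq⟩ := hEo.2.1
      obtain ⟨z, hz, hzW, -⟩ := exists_transversal hP hDo hD hE' hDE hW hp hq
      have hset : {x | x - p ∈ W} = {x | x - z ∈ W} := by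
        ext x
        have : x - p = (x - z) + (z - p) := by abel
        simp only [Set.mem_ofPred_eq, this]
        exact Submodule.add_mem_iff_left W hzW
      obtain ⟨h1, h2⟩ := hEo.inter_subspace hz W
      rw [← hset] at h1 h2
      have hne : ((cell P E ∩ {x | x - p ∈ W}) ∩ {x | v x < c}).Nonempty := by
        have hvz := (hv z (hE'.subset hz.1)).1
        have hpos : 0 < v z - v p + ε := by linarith
        obtain ⟨h1, h2, h3⟩ := hscale E hE' hDE z hz hzW (ε / (v z - v p + ε))
          (by positivity) ((div_le_one hpos).2 (by linarith))
        refine ⟨_, ⟨h1, h2⟩, ?_⟩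
        rw [Set.mem_ofPred_eq, h3, hc]
        have : ε / (v z - v p + ε) * (v z - v p) < ε := by
          rw [div_mul_eq_mul_div, div_lt_iff₀ hpos]
          nlinarith
        linarith
      obtain ⟨h3, h4⟩ := h1.inter_halfspace v c hne
      rw [Set.inter_assoc] at h3 h4
      refine ⟨h3, ?_⟩
      rw [h4, h2, vectorSpan_cell hP hE' hEo.2.1, faceDim_eq, faceDim_eq,
        ← finrank_inf_compl (vectorSpan_mono ℝ hDE) hW, add_assoc, pow_add, ← two_mul, pow_mul]
      simp
    · left
      refine ⟨?_, if_neg hDE⟩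
      ext x
      simp only [Set.mem_inter_iff, Set.mem_ofPred_eq, Set.mem_empty_iff_false, iff_false]
      rintro ⟨hx, hxW, hxv⟩
      exact absurd (hεE E (Finset.mem_filter.1 hE).1 hDE x hx.1 hxW) (not_le.2 hxv)
  · exact Or.inr (Or.inr ⟨hFv.inter (hNconv.inter (convex_halfSpace_le v.isLinear c)),
      hFc.inter_right (hNclosed.inter (isClosed_le hcont continuous_const)),
      ⟨y, hyF, hyW, hyv.le⟩, rfl⟩)
  · exact Or.inr (Or.inr ⟨hFv.inter (hNconv.inter (convex_hyperplane v.isLinear c)),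
      hFc.inter_right (hNclosed.inter (isClosed_eq hcont continuous_const)),
      ⟨y, hyF, hyW, hyv⟩, rfl⟩)
  · intro x
    rw [sum_ind_cell hfin hF]
    by_cases hx : x ∈ F ∧ x - p ∈ W
    · rcases lt_trichotomy (v x) c with h | h | h
      · simp [ind, hx, h, h.le, h.ne]
      · simp [ind, hx, h]
      · simp [ind, hx, h.not_gt, h.not_ge, h.ne']
    · have h' : ∀ T : Set (Fin m → ℝ), x ∉ F ∩ ({x | x - p ∈ W} ∩ T) :=
        fun T h => hx ⟨h.1, h.2.1⟩
      simp only [ind, if_neg (h' _), sub_self]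


/-! ### Palindromicity -/

theorem coeff_g {k : ℕ} (f : ℚ[X]) (i : ℕ) :
    (C (f.coeff 0) + ∑ l ∈ Finset.Icc 1 (k / 2),
        C (f.coeff l - f.coeff (l - 1)) * X ^ l).coeff i
      = if i = 0 then f.coeff 0 else if i ≤ k / 2 then f.coeff i - f.coeff (i - 1) else 0 := by
  rw [coeff_add, coeff_C, finsetSum_coeff]
  simp only [coeff_C_mul_X_pow]
  rw [Finset.sum_ite_eq]
  by_cases h0 : i = 0
  · simp [h0]
  · have : 1 ≤ i := Nat.one_le_iff_ne_zero.2 h0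
    simp [h0, this]

/-- If `f` is palindromic of degree `k` and `g` is the truncation of `(1 - X) f` to
degree `k / 2`, then the reflection of `g` in degree `k + 1` is `g + (X - 1) f`. -/
theorem reflect_g {k : ℕ} {f g : ℚ[X]} (hdeg : f.natDegree ≤ k) (hpal : reflect k f = f)
    (hg : g = C (f.coeff 0) + ∑ l ∈ Finset.Icc 1 (k / 2),
        C (f.coeff l - f.coeff (l - 1)) * X ^ l) :
    g.natDegree ≤ k ∧ reflect (k + 1) g = g + (X - 1) * f := by
  have hgc : ∀ i, g.coeff i = if i = 0 then f.coeff 0 else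
      if i ≤ k / 2 then f.coeff i - f.coeff (i - 1) else 0 := fun i => by rw [hg, coeff_g]
  have hz : ∀ i, k < i → f.coeff i = 0 := fun i hi =>
    coeff_eq_zero_of_natDegree_lt (by omega)
  have hsym : ∀ i j, i + j = k → f.coeff i = f.coeff j := by
    intro i j hij
    conv_lhs => rw [← hpal]
    rw [coeff_reflect, revAt_le (by omega)]
    congr 1
    omega
  refine ⟨?_, ?_⟩
  · rw [natDegree_le_iff_coeff_eq_zero]
    intro i hi
    rw [hgc, if_neg (by omega), if_neg (by omega)]
  ext i
  rw [coeff_reflect, coeff_add, sub_mul, one_mul, coeff_sub]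
  rcases i with _ | i
  · rw [revAt_le (by omega), coeff_X_mul_zero, hgc, hgc, if_neg (by omega), if_neg (by omega)]
    simp
  rw [coeff_X_mul]
  by_cases hik : i ≤ k
  · rw [revAt_le (by omega), hgc, hgc, if_neg (show ¬ i + 1 = 0 by omega)]
    by_cases h1 : i + 1 ≤ k / 2
    · rw [if_neg (by omega), if_neg (by omega), if_pos h1, Nat.add_sub_cancel]
      ring
    · rw [if_neg h1]
      by_cases h2 : k + 1 - (i + 1) = 0
      · have : i = k := by omega
        subst this
        rw [if_pos h2, hz (i + 1) (by omega), hsym 0 i (by omega)]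
        ring
      · rw [if_neg h2]
        by_cases h3 : k + 1 - (i + 1) ≤ k / 2
        · rw [if_pos h3, hsym (k + 1 - (i + 1)) i (by omega),
            hsym (k + 1 - (i + 1) - 1) (i + 1) (by omega)]
          ring
        · rw [if_neg h3, hsym i (i + 1) (by omega)]
          ring
  · rw [revAt_eq_self_of_lt (by omega), hgc, hz i (by omega), hz (i + 1) (by omega)]
    simp

theorem reflect_finset_sum {ι : Type*} (s : Finset ι) (N : ℕ) (p : ι → ℚ[X]) :
    reflect N (∑ i ∈ s, p i) = ∑ i ∈ s, reflect N (p i) := by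
  induction s using Finset.induction_on with
  | empty => simp
  | insert a s ha ih => rw [Finset.sum_insert ha, Finset.sum_insert ha, reflect_add, ih]

theorem natDegree_X_sub_one_pow (k : ℕ) : ((X - 1 : ℚ[X]) ^ k).natDegree ≤ k := by
  have : (X - 1 : ℚ[X]) = X - C 1 := by simp
  rw [this, natDegree_pow, natDegree_X_sub_C, mul_one]

theorem reflect_X_sub_one_pow (k : ℕ) :
    reflect k ((X - 1 : ℚ[X]) ^ k) = (-1) ^ k * (X - 1) ^ k := by
  induction k with
  | zero => simp
  | succ k ih =>
    have h1 : reflect 1 (X - 1 : ℚ[X]) = -1 * (X - 1) := by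
      have : (X - 1 : ℚ[X]) = X + C (-1) := by simp [sub_eq_add_neg]
      rw [this, reflect_add, reflect_one_X, reflect_C]
      simp
    rw [pow_succ, reflect_mul _ _ (natDegree_X_sub_one_pow k)
      (by simpa using natDegree_X_sub_one_pow 1), ih, h1, pow_succ]
    ring

/-- Stanley's theorem for an abstract finite Eulerian poset `s` (without its least element, whose
contributions `(X - 1) ^ k` are written separately). -/
theorem stanley_palindromic {α : Type*} [PartialOrder α] (s : Finset α) (dim : α → ℕ)
    (f g : α → ℚ[X]) (hdim : ∀ D ∈ s, ∀ E ∈ s, D < E → dim D < dim E)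
    (hone : ∀ F ∈ s, ∑ E ∈ s.filter (fun E => E ≤ F), (-1 : ℤ) ^ dim E = 1)
    (hzero : ∀ D ∈ s, ∀ F ∈ s, D < F →
      ∑ E ∈ (s.filter (fun E => E ≤ F)).filter (fun E => D ≤ E), (-1 : ℤ) ^ dim E = 0)
    (hf : ∀ F ∈ s, f F = (X - 1) ^ dim F +
      ∑ E ∈ s.filter (fun E => E < F), g E * (X - 1) ^ (dim F - 1 - dim E))
    (hg : ∀ F ∈ s, g F = C ((f F).coeff 0) + ∑ l ∈ Finset.Icc 1 (dim F / 2),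
      C ((f F).coeff l - (f F).coeff (l - 1)) * X ^ l) :
    ∀ n, ∀ F ∈ s, dim F = n → (f F).natDegree ≤ dim F ∧ reflect (dim F) (f F) = f F := by
  intro n
  induction n using Nat.strong_induction_on with
  | _ n ih =>
  intro F hF hn
  have hlt : ∀ E ∈ s.filter (fun E => E < F), E ∈ s ∧ dim E < dim F := fun E hE => by
    rw [Finset.mem_filter] at hE
    exact ⟨hE.1, hdim E hE.1 F hF hE.2⟩
  have hrec : ∀ E ∈ s.filter (fun E => E < F), (g E).natDegree ≤ dim E ∧
      reflect (dim E + 1) (g E) = g E + (X - 1) * f E := fun E hE => by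
    obtain ⟨h1, h2⟩ := hlt E hE
    obtain ⟨h3, h4⟩ := ih (dim E) (by omega) E h1 rfl
    exact reflect_g h3 h4 (hg E h1)
  -- the reflected `g E` in terms of the faces of `E`
  have hexp : ∀ E ∈ s.filter (fun E => E < F), reflect (dim E + 1) (g E) =
      (X - 1) ^ (dim E + 1) +
        ∑ D ∈ s.filter (fun D => D < F), if D ≤ E then g D * (X - 1) ^ (dim E - dim D) else 0 := by
    intro E hE
    have hEs := (Finset.mem_filter.1 hE).1
    have hEF := (Finset.mem_filter.1 hE).2
    rw [(hrec E hE).2, hf E hEs, mul_add, ← pow_succ', ← Finset.sum_filter]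
    have hset : (s.filter (fun D => D < F)).filter (fun D => D ≤ E)
        = insert E (s.filter (fun D => D < E)) := by
      ext D
      simp only [Finset.mem_filter, Finset.mem_insert]
      constructor
      · rintro ⟨⟨h1, h2⟩, h3⟩
        rcases h3.eq_or_lt with h | h
        · exact Or.inl h
        · exact Or.inr ⟨h1, h⟩
      · rintro (rfl | ⟨h1, h2⟩)
        · exact ⟨⟨hEs, hEF⟩, le_rfl⟩
        · exact ⟨⟨h1, h2.trans hEF⟩, h2.le⟩
    rw [hset, Finset.sum_insert (by simp), Nat.sub_self, pow_zero, mul_one, Finset.mul_sum]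
    have : ∀ D ∈ s.filter (fun D => D < E),
        (X - 1) * (g D * (X - 1) ^ (dim E - 1 - dim D)) = g D * (X - 1) ^ (dim E - dim D) := by
      intro D hD
      have hD' := Finset.mem_filter.1 hD
      have := hdim D hD'.1 E hEs hD'.2
      rw [show dim E - dim D = dim E - 1 - dim D + 1 by omega, pow_succ]
      ring
    rw [Finset.sum_congr rfl this]
    ring
  constructor
  · rw [hf F hF]
    refine natDegree_add_le_of_degree_le (natDegree_X_sub_one_pow _)
      (natDegree_sum_le_of_forall_le _ _ fun E hE => ?_)
    have h1 := (hrec E hE).1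
    have h2 := (hlt E hE).2
    refine natDegree_mul_le.trans ?_
    have := natDegree_X_sub_one_pow (dim F - 1 - dim E)
    omega
  -- the sign sums over half-open intervals
  have hsplit : s.filter (fun E => E ≤ F) = insert F (s.filter (fun E => E < F)) := by
    ext D
    simp only [Finset.mem_filter, Finset.mem_insert]
    constructor
    · rintro ⟨h1, h3⟩
      rcases h3.eq_or_lt with h | h
      · exact Or.inl h
      · exact Or.inr ⟨h1, h⟩
    · rintro (rfl | ⟨h1, h2⟩)
      · exact ⟨hF, le_rfl⟩
      · exact ⟨h1, h2.le⟩
  have hone' : (-1 : ℚ[X]) ^ dim F + ∑ E ∈ s.filter (fun E => E < F), (-1 : ℚ[X]) ^ dim E = 1 := by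
    have := hone F hF
    rw [hsplit, Finset.sum_insert (by simp)] at this
    exact_mod_cast congrArg (Int.cast : ℤ → ℚ[X]) this
  have hzero' : ∀ D ∈ s.filter (fun E => E < F), (-1 : ℚ[X]) ^ dim F +
      ∑ E ∈ s.filter (fun E => E < F), (if D ≤ E then (-1 : ℚ[X]) ^ dim E else 0) = 0 := by
    intro D hD
    have hD' := Finset.mem_filter.1 hD
    have := hzero D hD'.1 F hF hD'.2
    rw [hsplit, Finset.filter_insert, if_pos hD'.2.le, Finset.sum_insert (by simp)] at this
    rw [← Finset.sum_filter]
    exact_mod_cast congrArg (Int.cast : ℤ → ℚ[X]) this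
  have hsq : ∀ k : ℕ, (-1 : ℚ[X]) ^ k * (-1) ^ k = 1 := fun k => by
    rw [← mul_pow]; norm_num
  have hsign : ∀ E ∈ s.filter (fun E => E < F),
      (-1 : ℚ[X]) ^ (dim F - 1 - dim E) = -((-1) ^ dim F * (-1) ^ dim E) := by
    intro E hE
    have h2 := (hlt E hE).2
    have h3 : (-1 : ℚ[X]) ^ dim F = (-1) ^ (dim F - 1 - dim E) * (-1) ^ dim E * (-1) := by
      rw [← pow_add, ← pow_succ]
      congr 1
      omega
    rw [h3]
    linear_combination (-(-1 : ℚ[X]) ^ (dim F - 1 - dim E)) * hsq (dim E)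
  have hterm : ∀ E ∈ s.filter (fun E => E < F),
      reflect (dim F) (g E * (X - 1) ^ (dim F - 1 - dim E)) =
        -((-1) ^ dim F * (-1) ^ dim E) * (X - 1) ^ dim F +
        ∑ D ∈ s.filter (fun D => D < F), -((-1) ^ dim F * (if D ≤ E then (-1) ^ dim E else 0)) *
          (g D * (X - 1) ^ (dim F - 1 - dim D)) := by
    intro E hE
    have h2 := (hlt E hE).2
    have hk : dim F = (dim E + 1) + (dim F - 1 - dim E) := by omega
    conv_lhs => rw [hk]
    rw [show dim E + 1 + (dim F - 1 - dim E) - 1 - dim E = dim F - 1 - dim E by omega,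
      reflect_mul _ _ ((hrec E hE).1.trans (Nat.le_succ _)) (natDegree_X_sub_one_pow _),
      reflect_X_sub_one_pow, hexp E hE, hsign E hE, add_mul, Finset.sum_mul]
    congr 1
    · have : (X - 1 : ℚ[X]) ^ dim F = (X - 1) ^ (dim E + 1) * (X - 1) ^ (dim F - 1 - dim E) := by
        rw [← pow_add, ← hk]
      rw [this]
      ring
    · refine Finset.sum_congr rfl fun D hD => ?_
      by_cases hDE : D ≤ E
      · rw [if_pos hDE, if_pos hDE]
        have hle : dim D ≤ dim E := by
          rcases hDE.eq_or_lt with rfl | h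
          · exact le_rfl
          · exact (hdim D (hlt D hD).1 E (hlt E hE).1 h).le
        have : (X - 1 : ℚ[X]) ^ (dim F - 1 - dim D)
            = (X - 1) ^ (dim E - dim D) * (X - 1) ^ (dim F - 1 - dim E) := by
          rw [← pow_add]
          congr 1
          omega
        rw [this]
        ring
      · rw [if_neg hDE, if_neg hDE]
        ring
  rw [hf F hF, reflect_add, reflect_X_sub_one_pow, reflect_finset_sum,
    Finset.sum_congr rfl hterm, Finset.sum_add_distrib, Finset.sum_comm, ← add_assoc]
  congr 1
  · rw [← Finset.sum_mul, ← add_mul, Finset.sum_neg_distrib, ← Finset.mul_sum]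
    have : (-1 : ℚ[X]) ^ dim F +
        -((-1) ^ dim F * ∑ E ∈ s.filter (fun E => E < F), (-1) ^ dim E) = 1 := by
      linear_combination (-(-1 : ℚ[X]) ^ dim F) * hone' + hsq (dim F)
    rw [this, one_mul]
  · refine Finset.sum_congr rfl fun D hD => ?_
    rw [← Finset.sum_mul, Finset.sum_neg_distrib, ← Finset.mul_sum]
    have : -((-1 : ℚ[X]) ^ dim F *
        ∑ E ∈ s.filter (fun E => E < F), (if D ≤ E then (-1) ^ dim E else 0)) = 1 := by
      linear_combination (-(-1 : ℚ[X]) ^ dim F) * hzero' D hD + hsq (dim F)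
    rw [this, one_mul]


/-- (Master duality for Stanley's `f`-polynomial.)  Let `P` be a
polytope of dimension `n` with Stanley `f`- and `g`-polynomials `(f_F)`, `(g_F)` of its
faces (the empty face `𝟎` contributes the term `(x-1)^{dim F}` to the recursion, since
`g_𝟎 = 1` and `dim 𝟎 = -1`).  Then `f_P(x) = x^n f_P(1/x)`, i.e. the coefficients of
`f_P` satisfy `a_i = a_{n-i}`. -/
theorem stmt2 (m n : ℕ) (P : Set (Fin m → ℝ))
    (S : Finset (Fin m → ℝ)) (hS : S.Nonempty) (hP : P = convexHull ℝ (S : Set (Fin m → ℝ)))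
    (hdim : faceDim P = n)
    (hfin : {F : Set (Fin m → ℝ) | IsFaceOf P F}.Finite)
    (f g : Set (Fin m → ℝ) → Polynomial ℚ)
    (hf : ∀ F, IsFaceOf P F →
      f F = (Polynomial.X - 1) ^ faceDim F +
        ∑ E ∈ hfin.toFinset.filter (fun E => E ⊂ F),
          g E * (Polynomial.X - 1) ^ (faceDim F - 1 - faceDim E))
    (hg : ∀ F, IsFaceOf P F →
      g F = Polynomial.C ((f F).coeff 0) +
        ∑ l ∈ Finset.Icc 1 (faceDim F / 2),
          Polynomial.C ((f F).coeff l - (f F).coeff (l - 1)) * Polynomial.X ^ l) :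
    ∀ i ≤ n, (f P).coeff i = (f P).coeff (n - i) := by
  have hne : P.Nonempty := hP ▸ (Finset.coe_nonempty.2 hS).convexHull
  have hmem : ∀ F, F ∈ hfin.toFinset ↔ IsFaceOf P F := fun F => by simp
  have hpal := (stanley_palindromic hfin.toFinset faceDim f g
    (fun D hD E hE h => ((hmem D).1 hD).dim_lt hne ((hmem E).1 hE) h)
    (fun F hF => sum_faces_eq_one hS hP hfin ((hmem F).1 hF))
    (fun D hD F hF h => sum_faces_eq_zero hS hP hfin ((hmem D).1 hD) ((hmem F).1 hF) h)
    (fun F hF => hf F ((hmem F).1 hF)) (fun F hF => hg F ((hmem F).1 hF))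
    n P ((hmem P).2 (Or.inl rfl)) hdim).2
  intro i hi
  conv_lhs => rw [← hpal]
  rw [coeff_reflect, hdim, revAt_le hi]
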